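/- Let p be a prime and let B = {b_1, …, b_n} ⊆ GF(p) \ {0} be a set of n ≥ 2 distinct nonzero elements with n² < p. Then the point set U = {(b_i + b_j⁻¹, b_j) : 1 ≤ i, j ≤ n} ⊆ AG(2,p) determines at least n² − n + 1 directions. -/

import Mathlib

/-!
Directions determined by a finite point set are studied through its Rédei polynomial
`R(x, y) = ∏ (x - (b - y a))`, the product over the points `(a, b)`; it is regarded as a monic
polynomial in `x` over `GF(p)[y]`. Let `r(x, y)` be the remainder of `x ^ p` on division by `R`.
Its total degree is at most `p`, so the coefficient of `x ^ j` has degree at most `p - j` in `y`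
(`exists_remainder`).

If the slope `y` is not determined, then `R(x, y)` has distinct roots, so it divides `x ^ p - x`
and `r(x, y) = x`. With `m` such slopes, every coefficient of `x ^ j` with `j ≥ 2`, `p - j < m`
has more zeros than its degree and vanishes. Hence `g(x) = r(x, 0)` has degree at most
`max 1 (p - m)`, and `∏ (x - b) = R(x, 0)` divides `x ^ p - g` (`exists_lacunary`).

For the point set at hand `R(x, 0) = ∏_{b ∈ B} (x - b) ^ n`, since for each `b ∈ B` the horizontal
line at height `b` carries exactly `n` points. Differentiating, `∏_{b ∈ B} (x - b) ^ (n - 1)` divides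
`g'`. If there were at most `n² - n` directions, then `deg g ≤ n² - n`, which forces `g' = 0`;
as `deg g < p`, the polynomial `g` is a constant `c`. But then each `b ∈ B` satisfies
`b = b ^ p = c`, contradicting `n ≥ 2`.
-/

/-- The set of directions (elements of `GF(p) ∪ {∞}`, encoded as `Option (ZMod p)`
with `none = ∞`) determined by a point set `U ⊆ AG(2,p) = (ZMod p)²`. -/
def dirSet (p : ℕ) (U : Set (ZMod p × ZMod p)) : Set (Option (ZMod p)) :=
  {d | ∃ P ∈ U, ∃ Q ∈ U, P ≠ Q ∧
    ((P.1 = Q.1 ∧ d = none) ∨ (P.1 ≠ Q.1 ∧ d = some ((P.2 - Q.2) * (P.1 - Q.1)⁻¹)))}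

open Polynomial

/-- A polynomial in `x` with coefficients in `K[y]` has total degree at most `k`: the monomial
`x ^ j * y ^ e` does not occur when `j + e > k`. -/
def TotalDegLE {K : Type*} [CommRing K] (k : ℕ) (P : K[X][X]) : Prop :=
  ∀ j e, k < j + e → (P.coeff j).coeff e = 0

namespace TotalDegLE

variable {K : Type*} [CommRing K]

lemma mul {a b : ℕ} {P Q : K[X][X]} (hP : TotalDegLE a P) (hQ : TotalDegLE b Q) :
    TotalDegLE (a + b) (P * Q) := by
  intro j e h
  rw [coeff_mul, finsetSum_coeff]
  refine Finset.sum_eq_zero fun x hx => ?_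
  rw [coeff_mul]
  refine Finset.sum_eq_zero fun z hz => ?_
  rw [Finset.HasAntidiagonal.mem_antidiagonal] at hx hz
  by_cases h1 : a < x.1 + z.1
  · rw [hP _ _ h1, zero_mul]
  · rw [hQ x.2 z.2 (by omega), mul_zero]

lemma sub {a : ℕ} {P Q : K[X][X]} (hP : TotalDegLE a P) (hQ : TotalDegLE a Q) :
    TotalDegLE a (P - Q) := by
  intro j e h
  rw [coeff_sub, coeff_sub, hP j e h, hQ j e h, sub_zero]

lemma one : TotalDegLE 0 (1 : K[X][X]) := by
  intro j e h
  rw [coeff_one]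
  split_ifs with hj
  · rw [coeff_one, if_neg (by omega)]
  · simp

lemma X : TotalDegLE 1 (Polynomial.X : K[X][X]) := by
  intro j e h
  rw [coeff_X]
  split_ifs with hj
  · rw [coeff_one, if_neg (by omega)]
  · simp

lemma const {k : ℕ} {c : K[X]} (hc : ∀ e, k < e → c.coeff e = 0) : TotalDegLE k (C c) := by
  intro j e h
  rw [coeff_C]
  split_ifs with hj
  · exact hc e (by omega)
  · simp

lemma prod {ι : Type*} (s : Finset ι) (f : ι → K[X][X]) (hf : ∀ i ∈ s, TotalDegLE 1 (f i)) :
    TotalDegLE s.card (∏ i ∈ s, f i) := by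
  classical
  induction s using Finset.induction_on with
  | empty => simpa using one
  | insert a s ha ih =>
    rw [Finset.prod_insert ha, Finset.card_insert_of_notMem ha, add_comm]
    exact (hf a (by simp)).mul (ih fun i hi => hf i (by simp [hi]))

end TotalDegLE

/-- Division with remainder of `x ^ k` by a polynomial `R` that is monic of degree `N` in `x` and
has total degree at most `N`: the remainder has total degree at most `k`. -/
lemma exists_remainder {K : Type*} [CommRing K] {N : ℕ} (hN : 1 ≤ N) {R : K[X][X]}
    (hR : R.Monic) (hdeg : R.natDegree = N) (hW : TotalDegLE N R) (k : ℕ) :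
    ∃ q r : K[X][X], X ^ k = R * q + r ∧ (∀ j, N ≤ j → r.coeff j = 0) ∧ TotalDegLE k r := by
  induction k with
  | zero =>
    refine ⟨0, 1, by simp, fun j hj => ?_, TotalDegLE.one⟩
    rw [coeff_one, if_neg (by omega)]
  | succ k ih =>
    obtain ⟨q, r, h, hr, hWr⟩ := ih
    -- `x * r` can only fail to be reduced through its coefficient of `x ^ N`, which is `c`
    set c := r.coeff (N - 1) with hc
    refine ⟨X * q + C c, X * r - C c * R, by rw [pow_succ, h]; ring, fun j hj => ?_, ?_⟩
    · obtain ⟨i, rfl⟩ : ∃ i, j = i + 1 := ⟨j - 1, by omega⟩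
      rw [coeff_sub, coeff_X_mul, coeff_C_mul]
      rcases hj.eq_or_lt with hj | hj
      · have : R.coeff (i + 1) = 1 := by rw [← hj, ← hdeg]; exact hR
        rw [this, hc, hj]; simp
      · rw [hr i (by omega), coeff_eq_zero_of_natDegree_lt (by omega)]; simp
    · refine TotalDegLE.sub (add_comm k 1 ▸ TotalDegLE.X.mul hWr) ?_
      by_cases hk : N ≤ k + 1
      · have h2 : TotalDegLE (k + 1 - N) (C c) := TotalDegLE.const fun e he =>
          hWr _ _ (by omega)
        have := h2.mul hW
        rwa [Nat.sub_add_cancel hk] at this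
      · have : c = 0 := by
          ext e
          rw [hWr (N - 1) e (by omega), coeff_zero]
        intro j e _
        simp [this]

/-- If the lines of slope `y` through the points of `U` are pairwise distinct for each `y ∈ S`,
then `∏ (x - b)`, over the points `(a, b)` of `U`, divides `x ^ p - g` for a polynomial `g` of
degree at most `max 1 (p - |S|)`. -/
lemma exists_lacunary {p : ℕ} [Fact p.Prime] (U : Finset (ZMod p × ZMod p)) (hU : 2 ≤ U.card)
    (S : Finset (ZMod p))
    (hS : ∀ y ∈ S, Set.InjOn (fun P : ZMod p × ZMod p => P.2 - y * P.1) U) :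
    ∃ g : (ZMod p)[X], g.natDegree ≤ max 1 (p - S.card) ∧
      (∏ P ∈ U, (X - C P.2)) ∣ X ^ p - g := by
  classical
  set R : (ZMod p)[X][X] := ∏ P ∈ U, (X - C (C P.2 - X * C P.1)) with hRdef
  have hmon : R.Monic := monic_prod_of_monic _ _ fun P _ => monic_X_sub_C _
  have hdeg : R.natDegree = U.card := by
    rw [hRdef, natDegree_prod_of_monic _ _ fun P _ => monic_X_sub_C _]
    simp only [natDegree_X_sub_C, Finset.sum_const, smul_eq_mul, mul_one]
  have hW : TotalDegLE U.card R := by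
    refine TotalDegLE.prod _ _ fun P _ => TotalDegLE.X.sub (TotalDegLE.const fun e he => ?_)
    obtain ⟨i, rfl⟩ : ∃ i, e = i + 1 := ⟨e - 1, by omega⟩
    rw [coeff_sub, coeff_X_mul, coeff_C, coeff_C, if_neg (by omega), if_neg (by omega), sub_zero]
  obtain ⟨q, r, hqr, hr, hWr⟩ := exists_remainder (by omega) hmon hdeg hW p
  have hmap : ∀ y : ZMod p, (X : (ZMod p)[X]) ^ p =
      (∏ P ∈ U, (X - C (P.2 - y * P.1))) * q.map (evalRingHom y) + r.map (evalRingHom y) := by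
    intro y
    have hRy : R.map (evalRingHom y) = ∏ P ∈ U, (X - C (P.2 - y * P.1)) := by
      rw [hRdef, Polynomial.map_prod]
      refine Finset.prod_congr rfl fun P _ => ?_
      rw [Polynomial.map_sub, map_X, map_C, coe_evalRingHom, eval_sub, eval_mul, eval_X, eval_C,
        eval_C]
    rw [← hRy, ← Polynomial.map_mul, ← Polynomial.map_add, ← hqr, Polynomial.map_pow, map_X]
  have hspec : ∀ y ∈ S, r.map (evalRingHom y) = X := by
    intro y hy
    have hdvd : (∏ P ∈ U, (X - C (P.2 - y * P.1))) ∣ (X : (ZMod p)[X]) ^ p - X := by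
      refine Finset.prod_dvd_of_coprime ?_ fun P _ => ?_
      · intro P hP Q hQ hPQ
        exact isCoprime_X_sub_C_of_isUnit_sub
          (sub_ne_zero_of_ne fun h => hPQ (hS y hy hP hQ h)).isUnit
      · rw [dvd_iff_isRoot, IsRoot]
        simp [ZMod.pow_card]
    have hdvd2 : (∏ P ∈ U, (X - C (P.2 - y * P.1))) ∣ r.map (evalRingHom y) - X := by
      have h1 : r.map (evalRingHom y) - X = ((X : (ZMod p)[X]) ^ p - X) -
          (∏ P ∈ U, (X - C (P.2 - y * P.1))) * q.map (evalRingHom y) := by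
        rw [hmap y]; ring
      rw [h1]
      exact dvd_sub hdvd (dvd_mul_right _ _)
    refine sub_eq_zero.1 (eq_zero_of_dvd_of_degree_lt hdvd2 ?_)
    rw [degree_prod]
    simp only [degree_X_sub_C, Finset.sum_const, nsmul_eq_mul, mul_one]
    rw [degree_lt_iff_coeff_zero]
    intro j hj
    rw [coeff_sub, coeff_map, hr j hj, coeff_X, if_neg (by omega)]
    simp
  refine ⟨r.map (evalRingHom 0), ?_, ?_⟩
  · rw [natDegree_le_iff_coeff_eq_zero]
    intro j hj
    rw [coeff_map]
    suffices h : r.coeff j = 0 by rw [h, map_zero]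
    by_contra hne
    have h1 : (r.coeff j).natDegree ≤ p - j := by
      rw [natDegree_le_iff_coeff_eq_zero]
      intro e he
      exact hWr j e (by omega)
    have h2 : S.card ≤ (r.coeff j).natDegree := by
      refine card_le_degree_of_subset_roots fun y hy => ?_
      rw [mem_roots hne, IsRoot]
      have := congrArg (fun f => coeff f j) (hspec y hy)
      simp only [coeff_map, coeff_X] at this
      rw [if_neg (by omega)] at this
      simpa using this
    -- total degree at most `p` already excludes `j > p`
    have h3 : j ≤ p := by
      by_contra h
      refine hne ?_
      ext e
      rw [hWr j e (by omega), coeff_zero]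
    have h4 : S.card ≤ p := by simpa [ZMod.card] using S.card_le_univ
    omega
  · have := hmap 0
    simp only [zero_mul, sub_zero] at this
    exact ⟨q.map (evalRingHom 0), by rw [this]; ring⟩

/-- Two points on a common line of slope `y` coincide when `y` is not a determined direction. -/
lemma injOn_of_notMem_dirSet {p : ℕ} [Fact p.Prime] {U : Set (ZMod p × ZMod p)} {y : ZMod p}
    (hy : some y ∉ dirSet p U) : Set.InjOn (fun P : ZMod p × ZMod p => P.2 - y * P.1) U := by
  intro P hP Q hQ h
  simp only at h
  by_contra hne
  by_cases h1 : P.1 = Q.1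
  · exact hne (Prod.ext h1 (by rw [h1] at h; exact sub_left_injective h))
  · refine hy ⟨P, hP, Q, hQ, hne, Or.inr ⟨h1, ?_⟩⟩
    rw [Option.some_inj, eq_mul_inv_iff_mul_eq₀ (sub_ne_zero.2 h1)]
    linear_combination -h

/-- For `B ⊆ GF(p) \ {0}` with `|B| = n ≥ 2` and `n² < p`, the point set
`{(b + b'⁻¹, b') : b, b' ∈ B}` determines at least `n² - n + 1` directions. -/
theorem directions_of_hyperbola_shifted_grid (p n : ℕ) (hp : p.Prime)
    (B : Finset (ZMod p)) (h0 : (0 : ZMod p) ∉ B)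
    (hcard : B.card = n) (hn : 2 ≤ n) (hn2 : n ^ 2 < p) :
    n ^ 2 - n + 1 ≤
      (dirSet p {P : ZMod p × ZMod p | ∃ b ∈ B, ∃ b' ∈ B, P = (b + b'⁻¹, b')}).ncard := by
  classical
  have : Fact p.Prime := ⟨hp⟩
  by_contra! hlt
  set U : Set (ZMod p × ZMod p) := {P | ∃ b ∈ B, ∃ b' ∈ B, P = (b + b'⁻¹, b')} with hU
  have hinj : Function.Injective fun x : ZMod p × ZMod p => (x.1 + x.2⁻¹, x.2) := by
    rintro ⟨a, b⟩ ⟨c, d⟩ h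
    simp only [Prod.mk.injEq] at h
    obtain ⟨h1, rfl⟩ := h
    simpa using h1
  set V : Finset (ZMod p × ZMod p) := (B ×ˢ B).image fun x => (x.1 + x.2⁻¹, x.2) with hV
  have hVU : (V : Set (ZMod p × ZMod p)) = U := by
    ext P
    simp only [hV, hU, Finset.coe_image, Set.mem_image, Finset.mem_coe, Finset.mem_product,
      Prod.exists, Set.mem_ofPred_eq]
    constructor
    · rintro ⟨a, b, ⟨ha, hb⟩, rfl⟩; exact ⟨a, ha, b, hb, rfl⟩
    · rintro ⟨a, ha, b, hb, rfl⟩; exact ⟨a, b, ⟨ha, hb⟩, rfl⟩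
  have hVcard : V.card = n * n := by
    rw [hV, Finset.card_image_of_injective _ hinj, Finset.card_product, hcard]
  have hprod : ∏ P ∈ V, (X - C P.2) = (∏ b ∈ B, (X - C b)) ^ n := by
    rw [hV, Finset.prod_image hinj.injOn, Finset.prod_product]
    simp only [Finset.prod_const, hcard]
  have hsq : n ^ 2 - n = n * (n - 1) := by rw [pow_two, Nat.mul_sub_one]
  have hge : 2 ≤ n * (n - 1) := by
    calc 2 = 2 * 1 := rfl
      _ ≤ n * (n - 1) := Nat.mul_le_mul hn (by omega)
  set S : Finset (ZMod p) := Finset.univ.filter fun y => some y ∉ dirSet p U with hSdef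
  have hScard : p - S.card ≤ n ^ 2 - n := by
    set T : Finset (ZMod p) := Finset.univ.filter fun y => some y ∈ dirSet p U with hTdef
    have h1 : T.card + S.card = p := by
      have := Finset.card_filter_add_card_filter_not (s := (Finset.univ : Finset (ZMod p)))
        (fun y => some y ∈ dirSet p U)
      rwa [Finset.card_univ, ZMod.card] at this
    have h2 : T.card ≤ (dirSet p U).ncard := by
      rw [← Finset.card_image_of_injective T (Option.some_injective _),
        ← Set.ncard_coe_finset]
      refine Set.ncard_le_ncard ?_ (Set.toFinite _)
      intro d hd
      simp only [Finset.coe_image, Set.mem_image, Finset.mem_coe, hTdef, Finset.mem_filter] at hd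
      obtain ⟨y, ⟨_, hy⟩, rfl⟩ := hd
      exact hy
    omega
  obtain ⟨g, hgdeg, hgdvd⟩ := exists_lacunary V (by rw [hVcard]; nlinarith) S fun y hy => by
    rw [hVU]
    exact injOn_of_notMem_dirSet (Finset.mem_filter.1 hy).2
  have hgle : g.natDegree ≤ n * (n - 1) := hgdeg.trans (max_le (by omega) (by omega))
  rw [hprod] at hgdvd
  have hder : derivative g = 0 := by
    have h1 := pow_sub_one_dvd_derivative_of_pow_dvd hgdvd
    have h2 : derivative ((X : (ZMod p)[X]) ^ p - g) = -derivative g := by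
      simp [derivative_X_pow]
    rw [h2, dvd_neg] at h1
    refine eq_zero_of_dvd_of_natDegree_lt h1 ?_
    have hmon : (∏ b ∈ B, (X - C b)).Monic := monic_prod_of_monic _ _ fun b _ => monic_X_sub_C b
    rw [hmon.natDegree_pow, natDegree_prod_of_monic _ _ fun b _ => monic_X_sub_C b]
    simp only [natDegree_X_sub_C, Finset.sum_const, smul_eq_mul, mul_one, hcard]
    have := natDegree_derivative_le g
    rw [mul_comm (n - 1) n]
    omega
  have hconst : g = C (g.coeff 0) := by
    refine eq_C_of_natDegree_le_zero (natDegree_le_iff_coeff_eq_zero.2 fun j hj => ?_)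
    by_cases hjn : n * (n - 1) < j
    · exact coeff_eq_zero_of_natDegree_lt (by omega)
    have h1 : (derivative g).coeff (j - 1) = 0 := by rw [hder, coeff_zero]
    rw [coeff_derivative, Nat.sub_add_cancel hj, ← Nat.cast_add_one,
      Nat.sub_add_cancel hj] at h1
    refine (mul_eq_zero.1 h1).resolve_right fun h => ?_
    -- `0 < j < p`, so `j` is nonzero modulo `p`
    have := Nat.le_of_dvd hj ((ZMod.natCast_eq_zero_iff j p).1 h)
    omega
  have hroot : ∀ b ∈ B, b = g.coeff 0 := by
    intro b hb
    have h1 : (X - C b) ∣ X ^ p - g :=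
      ((Finset.dvd_prod_of_mem (fun b => X - C b) hb).trans (dvd_pow_self _ (by omega))).trans hgdvd
    rw [hconst, dvd_iff_isRoot, IsRoot] at h1
    simpa [ZMod.pow_card, sub_eq_zero] using h1
  obtain ⟨a, ha, b, hb, hab⟩ := Finset.one_lt_card.1 (by omega : 1 < B.card)
  exact hab ((hroot a ha).trans (hroot b hb).symm)
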